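/- Let P be a finite poset, let A be an antichain in P such that P − A is nonempty, and let w be the width of the subposet of P induced on P − A. Then the dimension of P is at most 2w + 1. -/

import Mathlib

/-!
By Dilworth's theorem `P - A` is covered by `w` chains. Each chain `C` admits two linear extensions
of `P`: one placing every `c ∈ C` above all elements not above `c`, the other placing it below all
elements not below `c`. These `2w` extensions reverse every incomparable pair that is not contained
in `A`. Since `A` is an antichain, any order on `A` is induced by a linear extension of `P`, so the
remaining pairs are reversed by one more extension, chosen to induce on `A` the opposite of one of
the first `2w`; as `P - A` is nonempty, there is one to oppose.

Dilworth's theorem for finite posets is Galvin's argument; the infinite case follows by compactness.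
-/

/-- `L` is a linear extension of the partial order relation `r`:
a linear order on the ground set extending `r`. -/
def IsLinExt {α : Type*} (r : α → α → Prop) (L : α → α → Prop) : Prop :=
  IsLinearOrder α L ∧ ∀ x y : α, r x y → L x y

/-- `Ls` is a realizer of size `t` of the partial order relation `r`. -/
def IsRealizer {α : Type*} (r : α → α → Prop) {t : ℕ} (Ls : Fin t → (α → α → Prop)) : Prop :=
  (∀ j, IsLinExt r (Ls j)) ∧ ∀ x y : α, r x y ↔ ∀ j, Ls j x y

/-- The poset with order relation `r` has a realizer of size `t`,
i.e. its dimension is at most `t`. -/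
def HasDimLE {α : Type*} (r : α → α → Prop) (t : ℕ) : Prop :=
  ∃ Ls : Fin t → (α → α → Prop), IsRealizer r Ls
/-- `A` is an antichain of the order `r` inside the set `S`. -/
def IsAntichainIn {α : Type*} (r : α → α → Prop) (S : Set α) (A : Finset α) : Prop :=
  ↑A ⊆ S ∧ ∀ x ∈ A, ∀ y ∈ A, x ≠ y → ¬ r x y ∧ ¬ r y x

/-- `w` is the width of the subposet of `r` induced on `S`: the maximum size
of an antichain contained in `S`. -/
def IsWidthOn {α : Type*} (r : α → α → Prop) (S : Set α) (w : ℕ) : Prop :=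
  IsGreatest {k | ∃ A : Finset α, IsAntichainIn r S A ∧ A.card = k} w

open Function

section Dilworth

variable {α : Type*} [Preorder α] {S K : Set α} {c : α → ℕ} {k i j : ℕ} {a x y : α}
  {B : Finset α}

/-- `B` is an antichain contained in `S` with exactly `k` elements. -/
structure IsNAntichain (S : Set α) (k : ℕ) (B : Finset α) : Prop where
  subset : ↑B ⊆ S
  isAntichain : IsAntichain (· ≤ ·) (B : Set α)
  card_eq : B.card = k

/-- The width of `S` is at most `k`, where only finite antichains are tested. -/
def HasWidthLE (S : Set α) (k : ℕ) : Prop :=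
  ∀ B : Finset α, ↑B ⊆ S → IsAntichain (· ≤ ·) (B : Set α) → B.card ≤ k

/-- `c` partitions `S` into `k` (possibly empty) chains: it colours `S` with the colours
`0, …, k - 1`, and its colour classes in `S` are chains. Its values outside `S` are irrelevant. -/
structure IsChainColoring (c : α → ℕ) (S : Set α) (k : ℕ) : Prop where
  mapsTo : Set.MapsTo c S (Set.Iio k)
  isChain : ∀ i, IsChain (· ≤ ·) {x ∈ S | c x = i}

/-- `x` lies in an antichain of size `k` of `S`. Galvin's argument takes for `k` the width of `S`,
so that these antichains are the largest ones. -/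
def IsCritical (S : Set α) (k : ℕ) (x : α) : Prop :=
  ∃ B, IsNAntichain S k B ∧ x ∈ B

/-- `x` is a greatest element among the critical elements of colour `i`. -/
structure IsCriticalTop (c : α → ℕ) (S : Set α) (k i : ℕ) (x : α) : Prop where
  isCritical : IsCritical S k x
  color_eq : c x = i
  le : ∀ z, IsCritical S k z → c z = i → z ≤ x

theorem IsNAntichain.mono {T : Set α} (hB : IsNAntichain S k B) (hST : S ⊆ T) :
    IsNAntichain T k B :=
  ⟨hB.subset.trans hST, hB.isAntichain, hB.card_eq⟩

theorem HasWidthLE.mono {T : Set α} (hT : HasWidthLE T k) (hST : S ⊆ T) : HasWidthLE S k :=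
  fun B hBS hB => hT B (hBS.trans hST) hB

theorem HasWidthLE.of_succ (hS : HasWidthLE S (k + 1)) (h : ∀ B, ¬ IsNAntichain S (k + 1) B) :
    HasWidthLE S k :=
  fun B hBS hB => Nat.le_of_lt_succ ((hS B hBS hB).lt_of_ne fun hcard => h B ⟨hBS, hB, hcard⟩)

theorem HasWidthLE.pos (hS : HasWidthLE S k) (hne : S.Nonempty) : 0 < k := by
  obtain ⟨x, hx⟩ := hne
  exact hS {x} (by simpa using hx) (by simp)

theorem IsCritical.mem (hx : IsCritical S k x) : x ∈ S :=
  let ⟨_, hB, hxB⟩ := hx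
  hB.subset hxB

theorem IsChainColoring.le_or_ge (hc : IsChainColoring c S k) (hx : x ∈ S) (hy : y ∈ S)
    (hxy : c x = c y) : x ≤ y ∨ y ≤ x :=
  (hc.isChain (c y)).total ⟨hx, hxy⟩ ⟨hy, rfl⟩

/-- The chains of the colouring meet `B` in at most one point each, so the pigeonhole principle
applies. -/
theorem IsChainColoring.exists_mem_color_eq (hc : IsChainColoring c S k) (hB : IsNAntichain S k B)
    (hi : i < k) : ∃ z ∈ B, c z = i := by
  have hinj : Set.InjOn c B := fun x hx y hy hxy =>
    (hc.le_or_ge (hB.subset hx) (hB.subset hy) hxy).elim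
      (hB.isAntichain.eq hx hy) (hB.isAntichain.eq' hx hy)
  have hmaps : Set.MapsTo c B (Finset.range k) := fun x hx => by
    simpa using hc.mapsTo (hB.subset hx)
  exact Finset.surjOn_of_injOn_of_card_le c hmaps hinj (by simp [hB.card_eq]) (by simpa using hi)

theorem IsChainColoring.exists_succ_of_sdiff (hc : IsChainColoring c (S \ K) k)
    (hK : IsChain (· ≤ ·) K) : ∃ c', IsChainColoring c' S (k + 1) := by
  classical
  have hlt : ∀ x ∈ S, x ∉ K → c x < k := fun x hx hxK => hc.mapsTo ⟨hx, hxK⟩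
  refine ⟨K.piecewise (fun _ => k) c, fun x hx => ?_, fun i => ?_⟩
  · by_cases hxK : x ∈ K
    · simp [hxK]
    · simpa [hxK] using (hlt x hx hxK).trans k.lt_succ_self
  · by_cases hik : i = k
    · refine hK.mono fun x ⟨hx, hxi⟩ => by_contra fun hxK => (hlt x hx hxK).ne ?_
      simpa [hxK, hik] using hxi
    · refine (hc.isChain i).mono fun x ⟨hx, hxi⟩ => ?_
      have hxK : x ∉ K := fun hxK => hik (by simpa [hxK] using hxi.symm)
      exact ⟨⟨hx, hxK⟩, by simpa [hxK] using hxi⟩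

theorem IsChainColoring.exists_isCriticalTop (hc : IsChainColoring c S k) (hfin : S.Finite)
    (hB : IsNAntichain S k B) (hi : i < k) : ∃ x, IsCriticalTop c S k i x := by
  obtain ⟨z, hzB, hzi⟩ := hc.exists_mem_color_eq hB hi
  obtain ⟨x, ⟨hx, hxi⟩, hmax⟩ := (hfin.subset fun x hx => hx.1.mem :
    {x | IsCritical S k x ∧ c x = i}.Finite).exists_maximal ⟨z, ⟨B, hB, hzB⟩, hzi⟩
  refine ⟨x, hx, hxi, fun z hz hzi => ?_⟩
  exact (hc.le_or_ge hz.mem hx.mem (hzi.trans hxi.symm)).elim id (hmax ⟨hz, hzi⟩)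

/-- The antichain witnessing that `y` is critical contains an element `z` of colour `i`; it lies
below `x`, hence below `y`, and therefore equals `y`. -/
theorem IsChainColoring.eq_of_isCriticalTop_le (hc : IsChainColoring c S k) (hi : i < k)
    (hx : IsCriticalTop c S k i x) (hy : IsCriticalTop c S k j y) (hxy : x ≤ y) : i = j := by
  obtain ⟨B, hB, hyB⟩ := hy.isCritical
  obtain ⟨z, hzB, hzi⟩ := hc.exists_mem_color_eq hB hi
  have hzy : z = y := hB.isAntichain.eq hzB hyB ((hx.le z ⟨B, hB, hzB⟩ hzi).trans hxy)
  rw [← hzi, hzy, hy.color_eq]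

/-- Otherwise the `k` tops together with `a` would form an antichain of size `k + 1`. -/
theorem IsChainColoring.exists_isCriticalTop_le (hc : IsChainColoring c (S \ {a}) k)
    (hS : HasWidthLE S k) (hfin : S.Finite) (ha : Maximal (· ∈ S) a)
    (hB : IsNAntichain (S \ {a}) k B) : ∃ i < k, ∃ x, IsCriticalTop c (S \ {a}) k i x ∧ x ≤ a := by
  classical
  by_contra! hnot
  have : Nonempty α := ⟨a⟩
  choose! x hx using fun i (hi : i < k) => hc.exists_isCriticalTop hfin.sdiff hB hi
  have hinj : Set.InjOn x (Finset.range k) := fun i hi j hj hij =>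
    hc.eq_of_isCriticalTop_le (by simpa using hi) (hx i (by simpa using hi))
      (hx j (by simpa using hj)) hij.le
  have hle : ∀ y ∈ (Finset.range k).image x, ¬ y ≤ a := by
    simpa using fun i hi => hnot i hi _ (hx i hi)
  have hmem : ∀ y ∈ (Finset.range k).image x, y ∈ S := by
    simpa using fun i hi => (hx i hi).isCritical.mem.1
  have hanti : IsAntichain (· ≤ ·) ((Finset.range k).image x : Set α) := by
    rintro _ hy _ hz hne hle
    obtain ⟨i, hi, rfl⟩ := by simpa using hy
    obtain ⟨j, hj, rfl⟩ := by simpa using hz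
    exact hne (congrArg x (hc.eq_of_isCriticalTop_le hi (hx i hi) (hx j hj) hle))
  have hcard := hS (insert a ((Finset.range k).image x))
    (by simpa [Set.insert_subset_iff, ha.prop, Set.subset_def] using hmem)
    (by
      rw [Finset.coe_insert]
      exact hanti.insert (fun y hy _ => hle y hy)
        fun y hy _ hay => hle y hy (ha.2 (hmem y hy) hay))
  rw [Finset.card_insert_of_notMem fun h => hle a h le_rfl, Finset.card_image_of_injOn hinj,
    Finset.card_range] at hcard
  exact k.not_succ_le_self hcard

theorem IsChainColoring.exists_isChain_hasWidthLE_sdiff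
    (hc : IsChainColoring c (S \ {a}) (k + 1)) (hS : HasWidthLE S (k + 1)) (hfin : S.Finite)
    (ha : Maximal (· ∈ S) a) : ∃ K, a ∈ K ∧ IsChain (· ≤ ·) K ∧ HasWidthLE (S \ K) k := by
  by_cases hex : ∃ B, IsNAntichain (S \ {a}) (k + 1) B
  · obtain ⟨B, hB⟩ := hex
    obtain ⟨i, hi, x, hx, hxa⟩ := hc.exists_isCriticalTop_le hS hfin ha hB
    refine ⟨insert a {z ∈ S \ {a} | c z = i ∧ z ≤ x}, Set.mem_insert _ _, ?_, ?_⟩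
    · have hsub : {z ∈ S \ {a} | c z = i ∧ z ≤ x} ⊆ {z ∈ S \ {a} | c z = i} :=
        fun z hz => ⟨hz.1, hz.2.1⟩
      exact ((hc.isChain i).mono hsub).insert fun z hz _ => Or.inr (hz.2.2.trans hxa)
    · refine (hS.mono Set.sdiff_subset).of_succ fun B' hB' => ?_
      have hB'a : IsNAntichain (S \ {a}) (k + 1) B' :=
        hB'.mono (Set.sdiff_subset_sdiff_right (by simp))
      obtain ⟨z, hzB', hzi⟩ := hc.exists_mem_color_eq hB'a hi
      exact Set.notMem_of_mem_sdiff (hB'.subset hzB')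
        (Set.mem_insert_of_mem a ⟨hB'a.subset hzB', hzi, hx.le z ⟨B', hB'a, hzB'⟩ hzi⟩)
  · exact ⟨{a}, rfl, IsChain.singleton,
      (hS.mono Set.sdiff_subset).of_succ fun B hB => hex ⟨B, hB⟩⟩

theorem exists_isChainColoring (S : Finset α) (hS : HasWidthLE (S : Set α) k) :
    ∃ c, IsChainColoring c (S : Set α) k := by
  classical
  induction S using Finset.strongInduction generalizing k with
  | H S ih =>
    obtain rfl | hne := S.eq_empty_or_nonempty
    · exact ⟨fun _ => 0, by simp [Set.mapsTo_empty], by simp⟩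
    obtain ⟨k, rfl⟩ := Nat.exists_eq_add_one.2 (hS.pos hne)
    obtain ⟨a, ha⟩ := S.exists_maximal hne
    obtain ⟨c, hc⟩ := ih (S.erase a) (Finset.erase_ssubset ha.prop) (hS.mono (by simp))
    rw [Finset.coe_erase] at hc
    obtain ⟨K, haK, hK, hwidth⟩ := hc.exists_isChain_hasWidthLE_sdiff hS S.finite_toSet ha
    have hcoe : (S.filter (· ∉ K) : Set α) = ↑S \ K := by ext; simp
    obtain ⟨c', hc'⟩ := ih (S.filter (· ∉ K))
      (Finset.filter_ssubset.2 ⟨a, ha.prop, not_not.2 haK⟩) (hcoe ▸ hwidth)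
    exact (hcoe ▸ hc').exists_succ_of_sdiff hK

/-- **Dilworth's theorem**, obtained from the finite case by compactness. -/
theorem exists_isChain_cover_of_hasWidthLE (hS : HasWidthLE S k) :
    ∃ C : Fin k → Set α, (∀ i, IsChain (· ≤ ·) (C i)) ∧ S ⊆ ⋃ i, C i := by
  classical
  choose c hc using fun F : Finset S =>
    exists_isChainColoring (F.map (Embedding.subtype _)) (hS.mono (by simp))
  have hmem : ∀ {F : Finset S} {x : S}, x ∈ F → (x : α) ∈ F.map (Embedding.subtype _) :=
    fun hx => Finset.mem_map_of_mem _ hx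
  obtain ⟨χ, hχ⟩ := Finset.rado_selection_subtype (β := fun _ : S => Fin k)
    fun F x => ⟨c F x, (hc F).mapsTo (hmem x.2)⟩
  refine ⟨fun i => (↑) '' (χ ⁻¹' {i}), ?_, fun x hx => Set.mem_iUnion.2 ⟨χ ⟨x, hx⟩, by simpa⟩⟩
  rintro i _ ⟨x, hx, rfl⟩ _ ⟨y, hy, rfl⟩ -
  obtain ⟨F, hF, hχF⟩ := hχ {x, y}
  have hxF := hχF ⟨x, by simp⟩
  have hyF := hχF ⟨y, by simp⟩
  refine (hc F).le_or_ge (hmem (hF (by simp))) (hmem (hF (by simp))) ?_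
  exact Fin.mk.inj_iff.1 ((hxF.symm.trans (hx.trans hy.symm)).trans hyF)

end Dilworth

section LinearExtensions

variable {α : Type*} [PartialOrder α] {A C : Set α} {T : α → α → Prop}

/-- The extension of `≤` that compares first the initial segments `{c ∈ C | c ≤ x}` by inclusion.
For a chain `C` it places every `c ∈ C` above all elements not above `c`. -/
def ChainUpLE (C : Set α) (x y : α) : Prop :=
  x ≤ y ∨ ∃ c ∈ C, c ≤ y ∧ ¬ c ≤ x

/-- The extension of `≤` obtained by adding the comparisons `T` between elements of `A`. -/
def AntichainLE (A : Set α) (T : α → α → Prop) (x y : α) : Prop :=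
  x ≤ y ∨ ∃ a ∈ A, ∃ b ∈ A, T a b ∧ x ≤ a ∧ b ≤ y

theorem isPartialOrder_chainUpLE (hC : IsChain (· ≤ ·) C) :
    IsPartialOrder α (ChainUpLE C) where
  refl x := Or.inl le_rfl
  trans := by
    rintro x y z (hxy | ⟨c, hc, hcy, hcx⟩) (hyz | ⟨d, hd, hdz, hdy⟩)
    · exact Or.inl (hxy.trans hyz)
    · exact Or.inr ⟨d, hd, hdz, fun hdx => hdy (hdx.trans hxy)⟩
    · exact Or.inr ⟨c, hc, hcy.trans hyz, hcx⟩
    · have hcd : c ≤ d := (hC.total hc hd).resolve_right fun hdc => hdy (hdc.trans hcy)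
      exact Or.inr ⟨c, hc, hcd.trans hdz, hcx⟩
  antisymm := by
    rintro x y (hxy | ⟨c, hc, hcy, hcx⟩) (hyx | ⟨d, hd, hdx, hdy⟩)
    · exact hxy.antisymm hyx
    · exact absurd (hdx.trans hxy) hdy
    · exact absurd (hcy.trans hyx) hcx
    · rcases hC.total hc hd with hcd | hdc
      · exact absurd (hcd.trans hdx) hcx
      · exact absurd (hdc.trans hcy) hdy

theorem isPartialOrder_antichainLE [IsTrans α T] [Std.Antisymm T] (hA : IsAntichain (· ≤ ·) A) :
    IsPartialOrder α (AntichainLE A T) where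
  refl x := Or.inl le_rfl
  trans := by
    rintro x y z (hxy | ⟨a, ha, b, hb, hab, hxa, hby⟩) (hyz | ⟨d, hd, e, he, hde, hyd, hez⟩)
    · exact Or.inl (hxy.trans hyz)
    · exact Or.inr ⟨d, hd, e, he, hde, hxy.trans hyd, hez⟩
    · exact Or.inr ⟨a, ha, b, hb, hab, hxa, hby.trans hyz⟩
    · obtain rfl := hA.eq hb hd (hby.trans hyd)
      exact Or.inr ⟨a, ha, e, he, trans_of T hab hde, hxa, hez⟩
  antisymm := by
    rintro x y (hxy | ⟨a, ha, b, hb, hab, hxa, hby⟩) (hyx | ⟨d, hd, e, he, hde, hyd, hex⟩)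
    · exact hxy.antisymm hyx
    · obtain rfl := hA.eq he hd (hex.trans (hxy.trans hyd))
      exact hxy.antisymm (hyd.trans hex)
    · obtain rfl := hA.eq hb ha (hby.trans (hyx.trans hxa))
      exact (hxa.trans hby).antisymm hyx
    · obtain rfl := hA.eq hb hd (hby.trans hyd)
      obtain rfl := hA.eq he ha (hex.trans hxa)
      obtain rfl := antisymm_of T hab hde
      exact (hxa.trans hby).antisymm (hyd.trans hex)

theorem exists_isLinExt_chain_above (hC : IsChain (· ≤ ·) C) :
    ∃ L : α → α → Prop, IsLinExt (· ≤ ·) L ∧ ∀ c ∈ C, ∀ x, ¬ c ≤ x → L x c := by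
  have := isPartialOrder_chainUpLE hC
  obtain ⟨L, hL, hle⟩ := extend_partialOrder (ChainUpLE C)
  exact ⟨L, ⟨hL, fun x y hxy => hle x y (Or.inl hxy)⟩,
    fun c hc x hcx => hle x c (Or.inr ⟨c, hc, le_rfl, hcx⟩)⟩

theorem exists_isLinExt_chain_below (hC : IsChain (· ≤ ·) C) :
    ∃ L : α → α → Prop, IsLinExt (· ≤ ·) L ∧ ∀ c ∈ C, ∀ x, ¬ x ≤ c → L c x := by
  obtain ⟨L, ⟨hL, hle⟩, hLC⟩ := exists_isLinExt_chain_above (α := αᵒᵈ) hC.symm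
  exact ⟨swap L, ⟨inferInstanceAs (IsLinearOrder αᵒᵈ (swap L)), fun x y hxy => hle y x hxy⟩, hLC⟩

theorem exists_isLinExt_antichain [IsTrans α T] [Std.Antisymm T] (hA : IsAntichain (· ≤ ·) A) :
    ∃ L : α → α → Prop, IsLinExt (· ≤ ·) L ∧ ∀ x ∈ A, ∀ y ∈ A, T x y → L x y := by
  have := isPartialOrder_antichainLE (T := T) hA
  obtain ⟨L, hL, hle⟩ := extend_partialOrder (AntichainLE A T)
  exact ⟨L, ⟨hL, fun x y hxy => hle x y (Or.inl hxy)⟩,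
    fun x hx y hy hxy => hle x y (Or.inr ⟨x, hx, y, hy, hxy, le_rfl, le_rfl⟩)⟩

end LinearExtensions

section Dimension

variable {α ι : Type*} [Fintype ι]

theorem hasDimLE_card {r : α → α → Prop} [Std.Refl r] {Ls : ι → α → α → Prop}
    (hext : ∀ i, IsLinExt r (Ls i)) (hrev : ∀ x y, ¬ r x y → ∃ i, Ls i y x) :
    HasDimLE r (Fintype.card ι) := by
  let e := Fintype.equivFin ι
  refine ⟨fun j => Ls (e.symm j), fun j => hext _,
    fun x y => ⟨fun hxy j => (hext _).2 x y hxy, fun h => by_contra fun hxy => ?_⟩⟩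
  obtain ⟨i, hyx⟩ := hrev x y hxy
  have hxy' : Ls i x y := by simpa using h (e i)
  exact hxy ((hext i).1.antisymm x y hxy' hyx ▸ refl_of r x)

theorem hasDimLE_of_compl_subset_iUnion_isChain [PartialOrder α] [Nonempty ι] {A : Set α}
    {C : ι → Set α} (hA : IsAntichain (· ≤ ·) A) (hC : ∀ i, IsChain (· ≤ ·) (C i))
    (hcover : Aᶜ ⊆ ⋃ i, C i) :
    HasDimLE (fun x y : α => x ≤ y) (2 * Fintype.card ι + 1) := by
  choose U hUext hU using fun i => exists_isLinExt_chain_above (hC i)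
  choose D hDext hD using fun i => exists_isLinExt_chain_below (hC i)
  let i₀ := Classical.arbitrary ι
  have : IsLinearOrder α (U i₀) := (hUext i₀).1
  obtain ⟨N, hNext, hN⟩ := exists_isLinExt_antichain (T := swap (U i₀)) hA
  let Ls : Option (ι ⊕ ι) → α → α → Prop := fun o => o.elim N (Sum.elim U D)
  have hext : ∀ o, IsLinExt (· ≤ ·) (Ls o) := by
    rintro (_ | i | i)
    exacts [hNext, hUext i, hDext i]
  have hrev : ∀ x y, ¬ x ≤ y → ∃ o, Ls o y x := by
    intro x y hxy
    by_cases hx : x ∈ A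
    · by_cases hy : y ∈ A
      · exact (total_of (U i₀) y x).elim (fun h => ⟨some (.inl i₀), h⟩)
          fun h => ⟨none, hN y hy x hx h⟩
      · obtain ⟨i, hi⟩ := Set.mem_iUnion.1 (hcover hy)
        exact ⟨some (.inr i), hD i y hi x hxy⟩
    · obtain ⟨i, hi⟩ := Set.mem_iUnion.1 (hcover hx)
      exact ⟨some (.inl i), hU i x hi y hxy⟩
  simpa [two_mul] using hasDimLE_card hext hrev

end Dimension

theorem IsWidthOn.hasWidthLE {α : Type*} [Preorder α] {S : Set α} {w : ℕ}
    (hw : IsWidthOn (· ≤ ·) S w) : HasWidthLE S w :=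
  fun B hBS hB => hw.2 ⟨B, ⟨hBS, fun _ hx _ hy hxy => ⟨hB hx hy hxy, hB hy hx hxy.symm⟩⟩, rfl⟩

theorem dim_le_two_mul_width_add_one_general {α : Type*}
    (r : α → α → Prop) (hr : IsPartialOrder α r) (A : Set α)
    (hA : ∀ x ∈ A, ∀ y ∈ A, x ≠ y → ¬ r x y ∧ ¬ r y x)
    (hne : (Set.univ \ A).Nonempty)
    (w : ℕ) (hw : IsWidthOn r (Set.univ \ A) w) :
    HasDimLE r (2 * w + 1) := by
  let _ : PartialOrder α :=
    { le := r
      le_refl := hr.refl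
      le_trans := hr.trans
      le_antisymm := hr.antisymm }
  have hanti : IsAntichain (· ≤ ·) A := fun x hx y hy hxy => (hA x hx y hy hxy).1
  have hwidth : HasWidthLE (Set.univ \ A) w := hw.hasWidthLE
  have : Nonempty (Fin w) := ⟨⟨0, hwidth.pos hne⟩⟩
  obtain ⟨C, hC, hcover⟩ := exists_isChain_cover_of_hasWidthLE hwidth
  rw [← Set.compl_eq_univ_sdiff] at hcover
  rw [← Fintype.card_fin w]
  exact hasDimLE_of_compl_subset_iUnion_isChain hanti hC hcover

/-- If `A` is an antichain in a finite poset `P` with `P - A` nonempty and `w`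
is the width of the subposet induced on `P - A`, then the dimension of `P` is
at most `2w + 1`. -/
theorem dim_le_two_mul_width_add_one {α : Type*} [Fintype α]
    (r : α → α → Prop) (hr : IsPartialOrder α r) (A : Set α)
    (hA : ∀ x ∈ A, ∀ y ∈ A, x ≠ y → ¬ r x y ∧ ¬ r y x)
    (hne : (Set.univ \ A).Nonempty)
    (w : ℕ) (hw : IsWidthOn r (Set.univ \ A) w) :
    HasDimLE r (2 * w + 1) :=
  dim_le_two_mul_width_add_one_general r hr A hA hne w hw
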